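/- The univariate Fejér kernel F(x) := (1/2)·sinc²(x/2), where sinc(x) = sin(πx)/(πx) for x ≠ 0 and sinc(0) = 1, satisfies the partition-of-unity condition Σ_{k∈ℤ} F(u − k) = 1 for every u ∈ ℝ. -/

import Mathlib

open MeasureTheory Filter

noncomputable section

/-- The sinc function: `sinc x = sin(πx)/(πx)` for `x ≠ 0`, `sinc 0 = 1`. -/
def sinc (x : ℝ) : ℝ := if x = 0 then 1 else Real.sin (Real.pi * x) / (Real.pi * x)

/-- The Fejér kernel `F(x) = (1/2)·sinc²(x/2)`. -/
def Fejer (x : ℝ) : ℝ := (1 / 2) * sinc (x / 2) ^ 2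

/-- The Fourier transform `χ̂(v) = ∫_ℝ χ(u)·e^{−ivu} du`. -/
def fourierT (χ : ℝ → ℝ) (v : ℝ) : ℂ :=
  ∫ u : ℝ, (χ u : ℂ) * Complex.exp (-(Complex.I * (v : ℂ) * (u : ℂ)))

/-! `k ↦ h * sinc (h * (u - k))` is the sequence of Fourier coefficients, on a circle of length one,
of the wave `t ↦ exp (2πiut)` cut off to an interval of length `h`. Parseval's identity therefore
gives `∑ₖ (h * sinc (h * (u - k)))² = h`, and the Fejér kernel is the case `h = 1/2`. -/

theorem sinc_eq_real_sinc_pi_mul (x : ℝ) : sinc x = Real.sinc (Real.pi * x) := by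
  simp [sinc, Real.sinc_apply, Real.pi_ne_zero]

theorem integral_exp_mul_ofReal_mul_I_eq_sinc (c r : ℝ) :
    ∫ t in -r..r, Complex.exp ((c * t : ℝ) * Complex.I) =
      ((2 * r * Real.sinc (c * r) : ℝ) : ℂ) := by
  rcases eq_or_ne c 0 with rfl | hc
  · simp [two_mul]
  · rw [intervalIntegral.integral_comp_mul_left (fun s : ℝ => Complex.exp (s * Complex.I)) hc,
      mul_neg, integral_exp_mul_I_eq_sinc, Complex.real_smul]
    push_cast
    field_simp [Complex.ofReal_ne_zero.mpr hc]

theorem intervalIntegral_indicator_Ioc {E : Type*} [NormedAddCommGroup E] [NormedSpace ℝ E]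
    {μ : Measure ℝ} {a b c d : ℝ} (hac : a ≤ c) (hcd : c ≤ d) (hdb : d ≤ b) (f : ℝ → E) :
    ∫ t in a..b, (Set.Ioc c d).indicator f t ∂μ = ∫ t in c..d, f t ∂μ := by
  rw [intervalIntegral.integral_of_le (hac.trans (hcd.trans hdb)),
    intervalIntegral.integral_of_le hcd, setIntegral_indicator measurableSet_Ioc,
    Set.inter_eq_self_of_subset_right (Set.Ioc_subset_Ioc hac hdb)]

/-- The box of width `h` centred at the origin, modulated to frequency `u`; its Fourier transform
is a rescaled `sinc` centred at `u`. The interval is half-open to match interval integrals. -/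
def modulatedBox (h u : ℝ) : ℝ → ℂ :=
  (Set.Ioc (-(h / 2)) (h / 2)).indicator
    fun t => Complex.exp ((2 * Real.pi * u * t : ℝ) * Complex.I)

theorem norm_modulatedBox (h u t : ℝ) :
    ‖modulatedBox h u t‖ = (Set.Ioc (-(h / 2)) (h / 2)).indicator 1 t := by
  simp only [modulatedBox, norm_indicator_eq_indicator_norm, Complex.norm_exp_ofReal_mul_I,
    Pi.one_def]

theorem memLp_modulatedBox (h u : ℝ) (p : ENNReal) (μ : Measure ℝ) [IsLocallyFiniteMeasure μ] :
    MemLp (modulatedBox h u) p μ := by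
  rw [modulatedBox, memLp_indicator_iff_restrict measurableSet_Ioc]
  have : IsFiniteMeasure (μ.restrict (Set.Ioc (-(h / 2)) (h / 2))) :=
    ⟨by simpa only [Measure.restrict_apply_univ] using measure_Ioc_lt_top⟩
  refine MemLp.of_bound (Continuous.aestronglyMeasurable (by fun_prop)) 1 (.of_forall fun t => ?_)
  exact (Complex.norm_exp_ofReal_mul_I _).le

theorem fourier_smul_modulatedBox (T h u t : ℝ) (n : ℤ) :
    fourier n (t : AddCircle T) • modulatedBox h u t = modulatedBox h (u + n / T) t := by
  by_cases ht : t ∈ Set.Ioc (-(h / 2)) (h / 2)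
  · simp only [modulatedBox, Set.indicator_of_mem ht, fourier_coe_apply, smul_eq_mul,
      ← Complex.exp_add]
    congr 1
    push_cast
    ring
  · simp only [modulatedBox, Set.indicator_of_notMem ht, smul_zero]

section BoxInsideInterval

variable {a b h : ℝ}

theorem integral_modulatedBox (h_nonneg : 0 ≤ h) (ha : a ≤ -(h / 2)) (hb : h / 2 ≤ b) (u : ℝ) :
    ∫ t in a..b, modulatedBox h u t = ((h * sinc (h * u) : ℝ) : ℂ) := by
  rw [modulatedBox, intervalIntegral_indicator_Ioc ha (by linarith) hb,
    integral_exp_mul_ofReal_mul_I_eq_sinc, sinc_eq_real_sinc_pi_mul]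
  ring_nf

theorem integral_norm_sq_modulatedBox (h_nonneg : 0 ≤ h) (ha : a ≤ -(h / 2)) (hb : h / 2 ≤ b)
    (u : ℝ) :
    ∫ t in a..b, ‖modulatedBox h u t‖ ^ 2 = h := by
  have norm_sq (t : ℝ) :
      ‖modulatedBox h u t‖ ^ 2 = (Set.Ioc (-(h / 2)) (h / 2)).indicator (fun _ => 1) t := by
    by_cases ht : t ∈ Set.Ioc (-(h / 2)) (h / 2) <;> simp [norm_modulatedBox, ht]
  simp_rw [norm_sq]
  rw [intervalIntegral_indicator_Ioc ha (by linarith) hb, integral_one, sub_neg_eq_add, add_halves]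

theorem fourierCoeffOn_modulatedBox (hab : a < b) (h_nonneg : 0 ≤ h) (ha : a ≤ -(h / 2))
    (hb : h / 2 ≤ b) (u : ℝ) (k : ℤ) :
    fourierCoeffOn hab (modulatedBox h u) k =
      ((h / (b - a) * sinc (h * (u - k / (b - a))) : ℝ) : ℂ) := by
  rw [fourierCoeffOn_eq_integral]
  simp_rw [fourier_smul_modulatedBox]
  rw [integral_modulatedBox h_nonneg ha hb, Complex.real_smul, ← Complex.ofReal_mul]
  push_cast
  ring_nf

end BoxInsideInterval

theorem hasSum_sq_mul_sinc {h : ℝ} (h_nonneg : 0 ≤ h) (h_le_one : h ≤ 1) (u : ℝ) :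
    HasSum (fun k : ℤ => (h * sinc (h * (u - k))) ^ 2) h := by
  have left_le : -(1 / 2) ≤ -(h / 2) := by linarith
  have le_right : h / 2 ≤ 1 / 2 := by linarith
  have hab : (-(1 / 2) : ℝ) < 1 / 2 := by norm_num
  have length_eq_one : (1 / 2 - -(1 / 2) : ℝ) = 1 := by norm_num
  have parseval := hasSum_sq_fourierCoeffOn hab (memLp_modulatedBox h u 2 _)
  simpa only [fourierCoeffOn_modulatedBox hab h_nonneg left_le le_right,
    integral_norm_sq_modulatedBox h_nonneg left_le le_right, length_eq_one, div_one, inv_one,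
    one_smul, Complex.norm_real, Real.norm_eq_abs, sq_abs] using parseval

theorem statement12_general {h : ℝ} (h_pos : 0 < h) (h_le_one : h ≤ 1) (u : ℝ) :
    HasSum (fun k : ℤ => h * sinc (h * (u - k)) ^ 2) 1 := by
  have rescaled := (hasSum_sq_mul_sinc h_pos.le h_le_one u).mul_left h⁻¹
  rw [inv_mul_cancel₀ h_pos.ne'] at rescaled
  refine rescaled.congr_fun fun k => ?_
  field_simp

/-- The Fejér kernel satisfies the partition of unity
`Σ_{k∈ℤ} F(u − k) = 1` for every `u ∈ ℝ`. -/
theorem statement12 (u : ℝ) : HasSum (fun k : ℤ => Fejer (u - (k : ℝ))) 1 := by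
  simpa [Fejer, div_eq_inv_mul] using statement12_general (h := 1 / 2) (by norm_num) (by norm_num) u
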